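/- For every τ ∈ ℍ and every z ∈ ℂ with z ∉ Λ_τ, the τ-derivative of ℘′ satisfies ∂℘′/∂τ(z|τ) = (−i/(4π))[6(℘(z|τ) − η₁(τ))℘′(z|τ) + (ζ(z|τ) − zη₁(τ))(12℘(z|τ)² − g₂(τ))]. -/

import Mathlib

open Complex Filter Topology Asymptotics

noncomputable section

/-- membership in the lattice `Λ_τ = ℤ + τℤ`. -/
def InLattice (τ z : ℂ) : Prop := ∃ m n : ℤ, z = (m : ℂ) + (n : ℂ) * τ

/-- the half-period generators `ω₀ = 0, ω₁ = 1, ω₂ = τ, ω₃ = 1 + τ`. -/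
def halfp (τ : ℂ) : Fin 4 → ℂ := ![0, 1, τ, 1 + τ]

/-- the Weierstrass elliptic function `℘(z|τ)`. -/
def wp (τ z : ℂ) : ℂ :=
  z⁻¹ ^ 2 + ∑' w : {w : ℤ × ℤ // w ≠ 0},
    ((z - ((w.1.1 : ℂ) + (w.1.2 : ℂ) * τ))⁻¹ ^ 2 - ((w.1.1 : ℂ) + (w.1.2 : ℂ) * τ)⁻¹ ^ 2)

/-- `℘′(z|τ)`, the `z`-derivative of `℘`. -/
def wpd (τ z : ℂ) : ℂ := deriv (wp τ) z

/-- `℘″(z|τ)`. -/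
def wpdd (τ z : ℂ) : ℂ := deriv (wpd τ) z

def e1 (τ : ℂ) : ℂ := wp τ (1 / 2)
def e2 (τ : ℂ) : ℂ := wp τ (τ / 2)
def e3 (τ : ℂ) : ℂ := wp τ ((1 + τ) / 2)

def g2 (τ : ℂ) : ℂ := -4 * (e1 τ * e2 τ + e1 τ * e3 τ + e2 τ * e3 τ)

/-- `zeta` is the Weierstrass zeta function: for each `τ ∈ ℍ`, `zeta τ` is odd, satisfies
`∂ζ/∂z = -℘` off the lattice, and `ζ(z|τ) - 1/z → 0` as `z → 0`. -/
def IsWeierstrassZeta (zeta : ℂ → ℂ → ℂ) : Prop :=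
  ∀ τ : ℂ, 0 < τ.im →
    (∀ z : ℂ, zeta τ (-z) = - zeta τ z) ∧
    (∀ z : ℂ, ¬ InLattice τ z → HasDerivAt (zeta τ) (- wp τ z) z) ∧
    Tendsto (fun z => zeta τ z - z⁻¹) (𝓝[≠] (0 : ℂ)) (𝓝 0)

/-- `eta1 τ = ζ(z+1|τ) - ζ(z|τ)` is the first quasi-period. -/
def IsEta1 (zeta : ℂ → ℂ → ℂ) (eta1 : ℂ → ℂ) : Prop :=
  ∀ τ : ℂ, 0 < τ.im → ∀ z : ℂ, ¬ InLattice τ z →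
    eta1 τ = zeta τ (z + 1) - zeta τ z

/-- `eta2 τ = ζ(z+τ|τ) - ζ(z|τ)` is the second quasi-period. -/
def IsEta2 (zeta : ℂ → ℂ → ℂ) (eta2 : ℂ → ℂ) : Prop :=
  ∀ τ : ℂ, 0 < τ.im → ∀ z : ℂ, ¬ InLattice τ z →
    eta2 τ = zeta τ (z + τ) - zeta τ z

/-- `sigma` is the Weierstrass sigma function: entire, odd, with
`∂/∂z log σ = ζ` off the lattice and `σ(z|τ)/z → 1` as `z → 0`. -/
def IsWeierstrassSigma (zeta sigma : ℂ → ℂ → ℂ) : Prop :=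
  ∀ τ : ℂ, 0 < τ.im →
    (∀ z : ℂ, sigma τ (-z) = - sigma τ z) ∧
    Differentiable ℂ (sigma τ) ∧
    (∀ z : ℂ, ¬ InLattice τ z → HasDerivAt (sigma τ) (zeta τ z * sigma τ z) z) ∧
    Tendsto (fun z => sigma τ z / z) (𝓝[≠] (0 : ℂ)) (𝓝 1)

/-- the Hamiltonian system (142) for `(p(τ), A(τ))` on `V`. -/
def HamSystem (n : Fin 4 → ℂ) (zeta : ℂ → ℂ → ℂ) (eta1 : ℂ → ℂ)
    (V : Set ℂ) (p A : ℂ → ℂ) : Prop :=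
  ∀ τ ∈ V,
    HasDerivAt p ((-Complex.I / (4 * (Real.pi : ℂ))) *
      (2 * A τ - zeta τ (2 * p τ) + 2 * p τ * eta1 τ)) τ ∧
    HasDerivAt A ((Complex.I / (4 * (Real.pi : ℂ))) *
      ((2 * wp τ (2 * p τ) + 2 * eta1 τ) * A τ - (3 / 2) * wpd τ (2 * p τ)
        - ∑ k : Fin 4, n k * (n k + 1) * wpd τ (p τ + halfp τ k / 2))) τ

/-- the generalized Lamé potential `I(z;τ)`. -/
def Ipot (n : Fin 4 → ℂ) (zeta : ℂ → ℂ → ℂ) (A B p τ z : ℂ) : ℂ :=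
  (∑ k : Fin 4, n k * (n k + 1) * wp τ (z + halfp τ k / 2))
    + (3 / 4) * (wp τ (z + p) + wp τ (z - p))
    + A * (zeta τ (z + p) - zeta τ (z - p)) + B

end

/-!
Mathlib's Weierstrass functions for the period pair `(1, τ)` agree with those of the statement,
where `g₂ = -4(e₁e₂ + e₁e₃ + e₂e₃)` because the `eᵢ` are distinct roots of the cubic: if `℘` and
`℘′` agree at `w` and `w + c`, then `℘` is `c`-periodic by uniqueness for `℘″ = 6℘² - g₂/2`.

Differentiating `℘′ = ∑ -2 / (z - m - nτ)³` termwise in `τ` gives `T(z) = ∑ -6n / (z - m - nτ)⁴`,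
which is odd, regular at `0`, `1`-periodic, and satisfies `T(z + τ) = T(z) - ℘″(z)`. With
`Z(z) = ζ(z) - η₁z`, the right-hand side is `-i/(4π)` times `6(℘ - η₁)℘′ + 2Z℘″`, the derivative of
`2Z℘′ + 4℘² - 4η₁℘`, whose poles at `0` cancel. As `Z` is `1`-periodic and `Z(z + τ) = Z(z) - 2πi`
by the residue theorem (Legendre's relation), both sides have the same transformation under
`z ↦ z + τ`. Their difference is therefore an elliptic function without poles, so constant, and it
is odd, so zero.
-/

section ComplexAnalysis

theorem eventually_eq_zero_of_deriv_deriv_eq_mul {f q : ℂ → ℂ} {z : ℂ} (hf : AnalyticAt ℂ f z)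
    (hq : AnalyticAt ℂ q z) (hode : deriv (deriv f) =ᶠ[𝓝 z] q * f) (hf₀ : f z = 0)
    (hf₁ : deriv f z = 0) : ∀ᶠ w in 𝓝 z, f w = 0 := by
  have hord : analyticOrderAt q z + analyticOrderAt f z + 1 + 1 = analyticOrderAt f z := by
    have h₁ := hf.deriv.analyticOrderAt_deriv_add_one
    have h₀ := hf.analyticOrderAt_deriv_add_one
    simp only [hf₀, hf₁, sub_zero] at h₀ h₁
    rw [← analyticOrderAt_mul hq hf, ← analyticOrderAt_congr hode, h₁, h₀]
  rw [← analyticOrderAt_eq_top]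
  by_contra hne
  have hle : analyticOrderAt f z + 1 ≤ analyticOrderAt f z := by
    calc analyticOrderAt f z + 1 ≤ analyticOrderAt q z + analyticOrderAt f z + 1 := by
          gcongr; exact le_add_self
      _ ≤ analyticOrderAt q z + analyticOrderAt f z + 1 + 1 := le_self_add
      _ = analyticOrderAt f z := hord
  exact absurd hle (not_le.mpr (ENat.lt_add_one_iff hne |>.mpr le_rfl))

variable {E : Type*} [NormedAddCommGroup E] [NormedSpace ℂ E]

theorem differentiableOn_update_limUnder_of_tendsto_smul [CompleteSpace E] {f : ℂ → E}
    {s : Set ℂ} {c : ℂ} (hs : s ∈ 𝓝 c) (hf : DifferentiableOn ℂ f (s \ {c}))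
    (hlim : Tendsto (fun z ↦ (z - c) • f z) (𝓝[≠] c) (𝓝 0)) :
    DifferentiableOn ℂ (Function.update f c (limUnder (𝓝[≠] c) f)) s := by
  refine Complex.differentiableOn_update_limUnder_of_isLittleO hs hf ?_
  have hcst : Tendsto (fun z ↦ (z - c) • f c) (𝓝[≠] c) (𝓝 0) := by
    have : ContinuousAt (fun z ↦ (z - c) • f c) c := by fun_prop
    simpa using this.tendsto.mono_left nhdsWithin_le_nhds
  rw [← isLittleO_norm_norm, isLittleO_iff_tendsto']
  · simpa [← smul_sub, norm_smul, mul_comm] using (hlim.sub hcst).norm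
  · filter_upwards [self_mem_nhdsWithin] with z hz h
    simp [sub_ne_zero.mpr hz] at h

theorem integral_horizontal_eq_of_vertical_sides_eq {f : ℂ → E} {a b y₁ y₂ : ℝ}
    (hf : DifferentiableOn ℂ f (Set.uIcc a b ×ℂ Set.uIcc y₁ y₂))
    (hside : ∀ y ∈ Set.uIcc y₁ y₂, f (a + y * I) = f (b + y * I)) :
    ∫ x in a..b, f (x + y₁ * I) = ∫ x in a..b, f (x + y₂ * I) := by
  have hrect := Complex.integral_boundary_rect_eq_zero_of_differentiableOn f
    (a + y₁ * I) (b + y₂ * I) (by simpa using hf)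
  simp only [add_re, ofReal_re, mul_re, I_re, mul_zero, ofReal_im, I_im, mul_one, sub_self,
    add_zero, add_im, mul_im, zero_add, intervalIntegral.integral_congr hside,
    add_sub_cancel_right] at hrect
  exact sub_eq_zero.mp hrect

end ComplexAnalysis

section PeriodicPole

/-- The `1`-periodic function with simple poles of residue `1` at the integers and no others.
Subtracting it, rather than `1 / z`, from a `1`-periodic function removes poles without disturbing
the cancellation of the vertical sides of a period rectangle. -/
noncomputable def periodicPole (z : ℂ) : ℂ := 2 * Real.pi * I / (exp (2 * Real.pi * I * z) - 1)

theorem periodicPole_add_one (z : ℂ) : periodicPole (z + 1) = periodicPole z := by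
  simp only [periodicPole, mul_add, mul_one, exp_periodic _]

theorem exp_two_pi_I_mul_sub_one_ne_zero {z : ℂ} (hz : ∀ n : ℤ, z ≠ n) :
    exp (2 * Real.pi * I * z) - 1 ≠ 0 := by
  rw [sub_ne_zero, Ne, Complex.exp_eq_one_iff]
  rintro ⟨n, hn⟩
  exact hz n (mul_left_cancel₀ two_pi_I_ne_zero (hn.trans (mul_comm _ _)))

theorem differentiableAt_periodicPole {z : ℂ} (hz : ∀ n : ℤ, z ≠ n) :
    DifferentiableAt ℂ periodicPole z := by
  have hne := exp_two_pi_I_mul_sub_one_ne_zero hz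
  unfold periodicPole
  fun_prop (disch := assumption)

theorem tendsto_mul_periodicPole :
    Tendsto (fun z ↦ z * periodicPole z) (𝓝[≠] 0) (𝓝 1) := by
  have hexp : HasDerivAt (fun z ↦ exp (2 * Real.pi * I * z)) (2 * Real.pi * I) 0 := by
    simpa using ((hasDerivAt_id (0 : ℂ)).const_mul (2 * Real.pi * I)).cexp
  have hslope := (hasDerivAt_iff_tendsto_slope_zero.mp hexp).inv₀ two_pi_I_ne_zero
  convert! hslope.const_mul (2 * Real.pi * I) using 1
  · ext z
    simp only [periodicPole, zero_add, mul_zero, exp_zero, smul_eq_mul, mul_inv, inv_inv]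
    ring
  · rw [mul_inv_cancel₀ two_pi_I_ne_zero]

theorem periodicPole_neg {z : ℂ} (hz : ∀ n : ℤ, z ≠ n) :
    periodicPole (-z) = -(2 * Real.pi * I) - periodicPole z := by
  have hne := exp_two_pi_I_mul_sub_one_ne_zero hz
  rw [periodicPole, periodicPole, mul_neg, exp_neg,
    show (exp (2 * Real.pi * I * z))⁻¹ - 1 =
      -(exp (2 * Real.pi * I * z) - 1) / exp (2 * Real.pi * I * z) by field_simp; ring]
  field_simp
  ring

theorem ne_intCast_of_im_ne_zero {z : ℂ} (hz : z.im ≠ 0) (n : ℤ) : z ≠ n := by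
  rintro rfl
  simp at hz

theorem continuous_periodicPole_horizontal {y : ℝ} (hy : y ≠ 0) :
    Continuous fun x : ℝ ↦ periodicPole (x + y * I) :=
  continuous_iff_continuousAt.mpr fun x ↦
    (differentiableAt_periodicPole
      (ne_intCast_of_im_ne_zero (by simpa using hy))).continuousAt.comp
        (f := fun x : ℝ ↦ (x + y * I : ℂ)) (by fun_prop)

theorem integral_periodicPole_of_pos {y : ℝ} (hy : 0 < y) (a : ℝ) :
    ∫ x : ℝ in a..a + 1, periodicPole (x + y * I) = -(2 * Real.pi * I) := by
  let q : ℝ → ℂ := fun x ↦ exp (2 * Real.pi * I * (x + y * I))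
  have hq (x : ℝ) : ‖q x‖ < 1 := by
    simp [q, Complex.norm_exp, hy, Real.pi_pos]
  have hderiv (x : ℝ) : HasDerivAt (fun x ↦ Complex.log (1 - q x) - 2 * Real.pi * I * x)
      (periodicPole (x + y * I)) x := by
    have hdq : HasDerivAt q (q x * (2 * Real.pi * I)) x := by
      simpa [q] using ((((hasDerivAt_id x).ofReal_comp).add_const (y * I : ℂ)).const_mul
        (2 * Real.pi * I)).cexp
    have hslit : 1 - q x ∈ slitPlane := by
      have := mem_slitPlane_of_norm_lt_one (z := -q x) (by simpa using hq x)
      rwa [← sub_eq_add_neg] at this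
    convert! ((hdq.const_sub 1).clog_real hslit).sub
      (((hasDerivAt_id x).ofReal_comp).const_mul (2 * Real.pi * I)) using 1
    have hne' := slitPlane_ne_zero hslit
    rw [periodicPole, show exp (2 * Real.pi * I * (x + y * I)) - 1 = -(1 - q x) by simp [q]]
    push_cast
    field_simp
    ring
  have hq1 : q (a + 1) = q a := by
    simp only [q]
    rw [← exp_periodic (2 * Real.pi * I * (a + y * I))]
    congr 1
    push_cast
    ring
  rw [intervalIntegral.integral_eq_sub_of_hasDerivAt (fun x _ ↦ hderiv x)
    ((continuous_periodicPole_horizontal hy.ne').intervalIntegrable _ _), hq1]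
  push_cast
  ring

theorem integral_periodicPole_of_neg {y : ℝ} (hy : y < 0) (a : ℝ) :
    ∫ x : ℝ in a..a + 1, periodicPole (x + y * I) = 0 := by
  have hneg (x : ℝ) : periodicPole (x + y * I) =
      -(2 * Real.pi * I) - periodicPole ((-x : ℝ) + (-y : ℝ) * I) := by
    rw [← periodicPole_neg (ne_intCast_of_im_ne_zero (by simpa using hy.ne))]
    congr 1
    push_cast
    ring
  have hmean := integral_periodicPole_of_pos (neg_pos.mpr hy) (-(a + 1))
  rw [neg_add_rev, neg_add_cancel_comm] at hmean
  simp only [hneg]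
  rw [intervalIntegral.integral_sub intervalIntegrable_const, intervalIntegral.integral_comp_neg
    (fun x : ℝ ↦ periodicPole (x + (-y : ℝ) * I)), neg_add_rev, hmean]
  · simp
  · exact ((continuous_periodicPole_horizontal (neg_ne_zero.mpr hy.ne)).comp
      continuous_neg).intervalIntegrable _ _

end PeriodicPole

section EllipticFunctions

theorem coeff_eq_of_cubic_roots {R : Type*} [CommRing R] [IsDomain R] {p q x y z : R}
    (hxy : y ≠ x) (hxz : z ≠ x) (hyz : z ≠ y) (hx : x ^ 3 + p * x + q = 0)
    (hy : y ^ 3 + p * y + q = 0) (hz : z ^ 3 + p * z + q = 0) : p = x * y + x * z + y * z := by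
  have hxy' : x ^ 2 + x * y + y ^ 2 + p = 0 :=
    mul_left_cancel₀ (sub_ne_zero.mpr hxy) (by linear_combination hy - hx)
  have hxz' : x ^ 2 + x * z + z ^ 2 + p = 0 :=
    mul_left_cancel₀ (sub_ne_zero.mpr hxz) (by linear_combination hz - hx)
  have hsum : x + y + z = 0 :=
    mul_left_cancel₀ (sub_ne_zero.mpr hyz) (by linear_combination hxz' - hxy')
  linear_combination hxy' - (x + y) * hsum

open scoped PeriodPair

variable (L : PeriodPair)

theorem isPreconnected_compl_lattice : IsPreconnected ((L.lattice : Set ℂ)ᶜ) := by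
  have : Countable L.lattice := L.latticeEquivProd.injective.countable
  exact ((Set.countable_coe_iff.mp this).isConnected_compl_of_one_lt_rank (by simp)).isPreconnected

theorem eventually_notMem_lattice (z : ℂ) : ∀ᶠ w in 𝓝[≠] z, w ∉ L.lattice := by
  filter_upwards [self_mem_nhdsWithin, mem_nhdsWithin_of_mem_nhds
    (L.compl_lattice_sdiff_singleton_mem_nhds z)] with w hwz hw hmem
  exact hw ⟨hmem, hwz⟩

theorem apply_eq_apply_of_periodic {f : ℂ → ℂ} (hf : Differentiable ℂ f)
    (h₁ : Function.Periodic f L.ω₁) (h₂ : Function.Periodic f L.ω₂) (z w : ℂ) : f z = f w := by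
  refine hf.apply_eq_apply_of_bounded (IsZLattice.isCompact_range_of_periodic L.lattice f
    hf.continuous fun x l hl ↦ ?_).isBounded z w
  obtain ⟨m, n, rfl⟩ := L.mem_lattice.mp hl
  exact (h₁.int_mul m).add_period (h₂.int_mul n) x

theorem apply_eq_apply_of_periodic_off_lattice {f : ℂ → ℂ}
    (hf : DifferentiableOn ℂ f (L.lattice : Set ℂ)ᶜ)
    (h₁ : ∀ z ∉ L.lattice, f (z + L.ω₁) = f z) (h₂ : ∀ z ∉ L.lattice, f (z + L.ω₂) = f z)
    (h₀ : Tendsto (fun z ↦ z * f z) (𝓝[≠] 0) (𝓝 0)) {z w : ℂ} (hz : z ∉ L.lattice)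
    (hw : w ∉ L.lattice) : f z = f w := by
  classical
  let g : ℂ → ℂ := fun z ↦ if z ∈ L.lattice then limUnder (𝓝[≠] 0) f else f z
  have hgf : ∀ x ∉ L.lattice, g x = f x := fun x hx ↦ if_neg hx
  have hper {l : ℂ} (hl : l ∈ L.lattice) (hfl : ∀ z ∉ L.lattice, f (z + l) = f z) :
      Function.Periodic g l := by
    intro x
    by_cases hx : x ∈ L.lattice
    · simp only [g, L.lattice.add_mem_iff_left hl, hx, if_true]
    · simp only [g, L.lattice.add_mem_iff_left hl, hx, if_false, hfl x hx]
  have hper₁ := hper L.ω₁_mem_lattice h₁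
  have hper₂ := hper L.ω₂_mem_lattice h₂
  have hg₀ : DifferentiableAt ℂ g 0 := by
    have hnhds := L.compl_lattice_sdiff_singleton_mem_nhds 0
    have hupd := differentiableOn_update_limUnder_of_tendsto_smul (f := f) hnhds
      (hf.mono fun x hx hmem ↦ hx.1 ⟨hmem, hx.2⟩) (by simpa using h₀)
    refine (hupd.differentiableAt hnhds).congr_of_eventuallyEq ?_
    filter_upwards [hnhds] with x hx
    rcases eq_or_ne x 0 with rfl | hx₀
    · simp [g]
    · rw [Function.update_of_ne hx₀, hgf x fun hmem ↦ hx ⟨hmem, hx₀⟩]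
  have hg : Differentiable ℂ g := by
    intro x
    by_cases hx : x ∈ L.lattice
    · obtain ⟨m, n, rfl⟩ := L.mem_lattice.mp hx
      have hshift := ((hper₁.int_mul m).add_period (hper₂.int_mul n)).sub_eq
      rw [← funext hshift]
      exact (differentiableAt_comp_sub_const (a := (m * L.ω₁ + n * L.ω₂ : ℂ))).mpr
        (by simpa using hg₀)
    · have hopen := L.isClosed_lattice.isOpen_compl.mem_nhds hx
      exact (hf.differentiableAt hopen).congr_of_eventuallyEq (eventually_of_mem hopen hgf)
  rw [← hgf z hz, ← hgf w hw, apply_eq_apply_of_periodic L hg hper₁ hper₂ z w]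

theorem hasDerivAt_weierstrassP {z : ℂ} (hz : z ∉ L.lattice) :
    HasDerivAt ℘[L] (℘'[L] z) z := by
  rw [← L.deriv_weierstrassP]
  exact (L.analyticOnNhd_weierstrassP z hz).differentiableAt.hasDerivAt

theorem weierstrassP_eq_weierstrassPExcept_zero_add (z : ℂ) :
    ℘[L] z = L.weierstrassPExcept 0 z + 1 / z ^ 2 := by
  simpa using (L.weierstrassPExcept_add 0 z).symm

theorem derivWeierstrassP_eq_derivWeierstrassPExcept_zero_sub (z : ℂ) :
    ℘'[L] z = L.derivWeierstrassPExcept 0 z - 2 / z ^ 3 := by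
  simpa using (L.derivWeierstrassPExcept_sub 0 z).symm

theorem not_tendsto_weierstrassP_nhds (c : ℂ) : ¬ Tendsto ℘[L] (𝓝[≠] 0) (𝓝 c) := by
  intro hc
  have hpole := tendsto_cobounded_of_meromorphicOrderAt_neg (f := ℘[L]) (x := 0) (by
    rw [L.order_weierstrassP 0 L.lattice.zero_mem]
    decide)
  exact hpole.not_tendsto (Metric.disjoint_cobounded_nhds c) hc

theorem not_eqOn_derivWeierstrassP_zero : ¬ Set.EqOn ℘'[L] 0 (L.lattice : Set ℂ)ᶜ := by
  intro hzero
  obtain ⟨c, hc⟩ := L.isClosed_lattice.isOpen_compl.exists_is_const_of_deriv_eq_zero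
    (isPreconnected_compl_lattice L) (L.differentiableOn_weierstrassP) (by simpa using hzero)
  exact not_tendsto_weierstrassP_nhds L c <| tendsto_const_nhds.congr' <|
    (eventually_notMem_lattice L 0).mono fun z hz ↦ (hc z hz).symm

theorem two_mul_deriv_derivWeierstrassP {z : ℂ} (hz : z ∉ L.lattice) :
    2 * deriv ℘'[L] z = 12 * ℘[L] z ^ 2 - L.g₂ := by
  have hmul : ∀ w ∈ (L.lattice : Set ℂ)ᶜ,
      ℘'[L] w * (2 * deriv ℘'[L] w - (12 * ℘[L] w ^ 2 - L.g₂)) = 0 := by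
    intro w hw
    have hP := hasDerivAt_weierstrassP L hw
    have hP' := (L.analyticOnNhd_derivWeierstrassP w hw).differentiableAt.hasDerivAt
    have hcubic := (((hP.pow 3).const_mul 4).sub (hP.const_mul L.g₂)).sub_const L.g₃
    have heq := hcubic.unique ((hP'.pow 2).congr_of_eventuallyEq (by
      filter_upwards [L.isClosed_lattice.isOpen_compl.mem_nhds hw] with y hy
      simpa using (L.derivWeierstrassP_sq y hy).symm))
    push_cast at heq
    linear_combination -heq
  have hanalytic : AnalyticOnNhd ℂ (fun w ↦ 2 * deriv ℘'[L] w - (12 * ℘[L] w ^ 2 - L.g₂))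
      (L.lattice : Set ℂ)ᶜ := fun w hw ↦ by
    have hP := L.analyticOnNhd_weierstrassP w hw
    have hP'' := (L.analyticOnNhd_derivWeierstrassP w hw).deriv
    fun_prop
  have hzero := (L.analyticOnNhd_derivWeierstrassP.eq_zero_or_eq_zero_of_mul_eq_zero hanalytic hmul
    (isPreconnected_compl_lattice L)).resolve_left (not_eqOn_derivWeierstrassP_zero L)
  exact sub_eq_zero.mp (hzero z hz)

theorem derivWeierstrassP_eq_zero_of_two_mul_mem {w : ℂ} (hw : 2 * w ∈ L.lattice) :
    ℘'[L] w = 0 := by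
  have hper := L.derivWeierstrassP_sub_coe w ⟨2 * w, hw⟩
  rw [show w - 2 * w = -w by ring, L.derivWeierstrassP_neg] at hper
  exact self_eq_neg.mp hper.symm

-- Both sides solve `℘″ = 6℘² - g₂/2`, so their difference solves a linear second-order equation.
theorem weierstrassP_add_eventuallyEq {w c : ℂ} (hw : w ∉ L.lattice) (hwc : w + c ∉ L.lattice)
    (h : ℘[L] (w + c) = ℘[L] w) (h' : ℘'[L] (w + c) = ℘'[L] w) :
    (fun z ↦ ℘[L] (z + c)) =ᶠ[𝓝 w] ℘[L] := by
  let d : ℂ → ℂ := fun z ↦ ℘[L] (z + c) - ℘[L] z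
  have hP : AnalyticAt ℂ ℘[L] w := L.analyticOnNhd_weierstrassP w hw
  have hPc : AnalyticAt ℂ (fun z ↦ ℘[L] (z + c)) w :=
    AnalyticAt.comp (g := ℘[L]) (f := (· + c)) (L.analyticOnNhd_weierstrassP _ hwc) (by fun_prop)
  have hmem : ∀ᶠ z in 𝓝 w, z ∉ L.lattice := L.isClosed_lattice.isOpen_compl.mem_nhds hw
  have hmemc : ∀ᶠ z in 𝓝 w, z + c ∉ L.lattice :=
    (L.isClosed_lattice.isOpen_compl.preimage (continuous_add_const c)).mem_nhds hwc
  have hderiv : deriv d =ᶠ[𝓝 w] fun z ↦ ℘'[L] (z + c) - ℘'[L] z := by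
    filter_upwards [hmem, hmemc] with z hz hzc
    exact (((hasDerivAt_weierstrassP L hzc).comp_add_const z c).sub
      (hasDerivAt_weierstrassP L hz)).deriv
  have hode : deriv (deriv d) =ᶠ[𝓝 w] (fun z ↦ 6 * (℘[L] (z + c) + ℘[L] z)) * d := by
    filter_upwards [hderiv.deriv, hmem, hmemc] with z hdz hz hzc
    have hP' := (L.analyticOnNhd_derivWeierstrassP _ hz).differentiableAt.hasDerivAt
    have hPc' := (L.analyticOnNhd_derivWeierstrassP _ hzc).differentiableAt.hasDerivAt
    rw [hdz, ((hPc'.comp_add_const z c).fun_sub hP').deriv, Pi.mul_apply]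
    linear_combination (two_mul_deriv_derivWeierstrassP L hzc -
      two_mul_deriv_derivWeierstrassP L hz) / 2
  have hd := eventually_eq_zero_of_deriv_deriv_eq_mul (hPc.fun_sub hP) (by fun_prop) hode
    (by simp [h]) (by simp [d, hderiv.eq_of_nhds, h'])
  exact hd.mono fun z hz ↦ sub_eq_zero.mp hz

theorem mem_lattice_of_weierstrassP_add_eq {w c : ℂ} (hw : w ∉ L.lattice)
    (hwc : w + c ∉ L.lattice) (h : ℘[L] (w + c) = ℘[L] w) (h' : ℘'[L] (w + c) = ℘'[L] w) :
    c ∈ L.lattice := by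
  by_contra hc
  let d : ℂ → ℂ := fun z ↦ ℘[L] (z + c) - ℘[L] z
  have hd : Meromorphic d := fun z ↦
    ((L.meromorphic_weierstrassP (z + c)).comp_analyticAt (f := ℘[L]) (g := (· + c))
      (by fun_prop)).fun_sub (L.meromorphic_weierstrassP z)
  have hdw : meromorphicOrderAt d w = ⊤ := meromorphicOrderAt_eq_top_iff.mpr <|
    ((weierstrassP_add_eventuallyEq L hw hwc h h').filter_mono nhdsWithin_le_nhds).mono
      fun z hz ↦ sub_eq_zero.mpr hz
  have hd₀ : meromorphicOrderAt d 0 = ⊤ := by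
    by_contra hne
    exact hd.meromorphicOn.meromorphicOrderAt_ne_top_of_isPreconnected isPreconnected_univ
      (Set.mem_univ 0) (Set.mem_univ w) hne hdw
  have hcont : ContinuousAt (fun z ↦ ℘[L] (z + c)) 0 :=
    ContinuousAt.comp (g := ℘[L]) (f := (· + c))
      (by simpa using (L.analyticOnNhd_weierstrassP c hc).continuousAt) (by fun_prop)
  exact not_tendsto_weierstrassP_nhds L _ <| (hcont.tendsto.mono_left nhdsWithin_le_nhds).congr' <|
    (meromorphicOrderAt_eq_top_iff.mp hd₀).mono fun z hz ↦ sub_eq_zero.mp hz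

theorem add_div_two_notMem_lattice : (L.ω₁ + L.ω₂) / 2 ∉ L.lattice := by
  have h := (L.mul_ω₁_add_mul_ω₂_mem_lattice (α := 1 / 2) (β := 1 / 2)).not.mpr (by norm_num)
  convert h using 2
  push_cast
  ring

theorem weierstrassP_ne_of_two_mul_mem {a b : ℂ} (ha : 2 * a ∈ L.lattice) (hb : 2 * b ∈ L.lattice)
    (ha' : a ∉ L.lattice) (hb' : b ∉ L.lattice) (hab : b - a ∉ L.lattice) : ℘[L] b ≠ ℘[L] a := by
  have heq : a + (b - a) = b := add_sub_cancel a b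
  refine fun h ↦ hab <| mem_lattice_of_weierstrassP_add_eq L ha' ?_ ?_ ?_ <;> rw [heq]
  · exact hb'
  · exact h
  · rw [derivWeierstrassP_eq_zero_of_two_mul_mem L ha,
      derivWeierstrassP_eq_zero_of_two_mul_mem L hb]

theorem weierstrassP_pow_three_sub_eq_zero {w : ℂ} (hw : 2 * w ∈ L.lattice) (hw' : w ∉ L.lattice) :
    ℘[L] w ^ 3 + -L.g₂ / 4 * ℘[L] w + -L.g₃ / 4 = 0 := by
  have hcubic := L.derivWeierstrassP_sq w hw'
  rw [derivWeierstrassP_eq_zero_of_two_mul_mem L hw] at hcubic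
  linear_combination -hcubic / 4

theorem g₂_eq_weierstrassP_half_periods :
    L.g₂ = -4 * (℘[L] (L.ω₁ / 2) * ℘[L] (L.ω₂ / 2) + ℘[L] (L.ω₁ / 2) * ℘[L] ((L.ω₁ + L.ω₂) / 2) +
      ℘[L] (L.ω₂ / 2) * ℘[L] ((L.ω₁ + L.ω₂) / 2)) := by
  have two₁ : 2 * (L.ω₁ / 2) ∈ L.lattice := by simpa [mul_div_cancel₀] using L.ω₁_mem_lattice
  have two₂ : 2 * (L.ω₂ / 2) ∈ L.lattice := by simpa [mul_div_cancel₀] using L.ω₂_mem_lattice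
  have two₃ : 2 * ((L.ω₁ + L.ω₂) / 2) ∈ L.lattice := by
    simpa [mul_div_cancel₀] using add_mem L.ω₁_mem_lattice L.ω₂_mem_lattice
  have h₁ := L.ω₁_div_two_notMem_lattice
  have h₂ := L.ω₂_div_two_notMem_lattice
  have h₃ := add_div_two_notMem_lattice L
  have h₂₁ : L.ω₂ / 2 - L.ω₁ / 2 ∉ L.lattice := fun hmem ↦
    h₃ (by convert add_mem hmem L.ω₁_mem_lattice using 1; ring)
  have ne₂₁ := weierstrassP_ne_of_two_mul_mem L two₁ two₂ h₁ h₂ h₂₁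
  have ne₃₁ := weierstrassP_ne_of_two_mul_mem L two₁ two₃ h₁ h₃ (by simpa [add_div] using h₂)
  have ne₃₂ := weierstrassP_ne_of_two_mul_mem L two₂ two₃ h₂ h₃ (by simpa [add_div] using h₁)
  have hroots := coeff_eq_of_cubic_roots ne₂₁ ne₃₁ ne₃₂
    (weierstrassP_pow_three_sub_eq_zero L two₁ h₁) (weierstrassP_pow_three_sub_eq_zero L two₂ h₂)
    (weierstrassP_pow_three_sub_eq_zero L two₃ h₃)
  linear_combination -4 * hroots

end EllipticFunctions

section UnitPeriodPair

/-- The period pair `(1, τ)`, through which Mathlib's Weierstrass functions describe `wp τ` and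
`wpd τ`. -/
noncomputable def unitPeriodPair (τ : ℂ) (hτ : 0 < τ.im) : PeriodPair where
  ω₁ := 1
  ω₂ := τ
  indep := by
    refine LinearIndependent.pair_iff.mpr fun s t h ↦ ?_
    have ht : t = 0 := by simpa [hτ.ne'] using congrArg Complex.im h
    have hs : s = 0 := by simpa [ht] using congrArg Complex.re h
    exact ⟨hs, ht⟩

variable {τ : ℂ}

theorem mem_lattice_unitPeriodPair (hτ : 0 < τ.im) {z : ℂ} :
    z ∈ (unitPeriodPair τ hτ).lattice ↔ InLattice τ z := by
  simp only [PeriodPair.mem_lattice, unitPeriodPair, mul_one, InLattice, eq_comm]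

theorem hasSum_int_prod_of_hasSum_lattice {E : Type*} [AddCommMonoid E] [TopologicalSpace E]
    (hτ : 0 < τ.im) {f : ℂ → E} {a : E}
    (h : HasSum (fun l : (unitPeriodPair τ hτ).lattice ↦ f l) a) :
    HasSum (fun x : ℤ × ℤ ↦ f (x.1 + x.2 * τ)) a := by
  have hequiv := ((unitPeriodPair τ hτ).latticeEquivProd.symm.toEquiv.hasSum_iff
    (f := fun l : (unitPeriodPair τ hτ).lattice ↦ f l)).mpr h
  have hsymm (x : ℤ × ℤ) :
      (((unitPeriodPair τ hτ).latticeEquivProd.symm x : (unitPeriodPair τ hτ).lattice) : ℂ) =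
        x.1 + x.2 * τ := by
    rw [PeriodPair.latticeEquiv_symm_apply]
    simp [unitPeriodPair]
  simpa only [Function.comp_def, LinearEquiv.coe_toEquiv, hsymm] using hequiv

theorem wp_eq_weierstrassP (hτ : 0 < τ.im) : wp τ = (unitPeriodPair τ hτ).weierstrassP := by
  funext z
  have h := hasSum_int_prod_of_hasSum_lattice hτ (f := fun l ↦ 1 / (z - l) ^ 2 - 1 / l ^ 2)
    ((unitPeriodPair τ hτ).hasSum_weierstrassP z)
  rw [← h.tsum_eq, wp, ← h.summable.tsum_subtype_add_tsum_subtype_compl {0}]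
  congr 1
  · simp
  · exact tsum_congr fun x ↦ by simp

theorem wpd_eq_derivWeierstrassP (hτ : 0 < τ.im) :
    wpd τ = (unitPeriodPair τ hτ).derivWeierstrassP := by
  funext z
  rw [wpd, wp_eq_weierstrassP hτ, PeriodPair.deriv_weierstrassP]

theorem g2_eq_g₂ (hτ : 0 < τ.im) : g2 τ = (unitPeriodPair τ hτ).g₂ := by
  rw [g₂_eq_weierstrassP_half_periods, ← wp_eq_weierstrassP hτ]
  rfl

theorem hasSum_wpd (hτ : 0 < τ.im) (z : ℂ) :
    HasSum (fun x : ℤ × ℤ ↦ -2 / (z - (x.1 + x.2 * τ)) ^ 3) (wpd τ z) := by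
  rw [wpd_eq_derivWeierstrassP hτ]
  exact hasSum_int_prod_of_hasSum_lattice hτ (f := fun l ↦ -2 / (z - l) ^ 3)
    ((unitPeriodPair τ hτ).hasSum_derivWeierstrassP z)

theorem hasSum_deriv_wpd (hτ : 0 < τ.im) {z : ℂ} (hz : ¬ InLattice τ z) :
    HasSum (fun x : ℤ × ℤ ↦ 6 / (z - (x.1 + x.2 * τ)) ^ 4) (deriv (wpd τ) z) := by
  rw [← mem_lattice_unitPeriodPair hτ] at hz
  rw [wpd_eq_derivWeierstrassP hτ, ← PeriodPair.derivWeierstrassPExcept_of_notMem _ z hz,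
    PeriodPair.deriv_derivWeierstrassPExcept_self]
  convert hasSum_int_prod_of_hasSum_lattice hτ (f := fun l ↦ 6 * ((l - z) ^ 4)⁻¹)
    (((unitPeriodPair τ hτ).hasSum_sumInvPow z (r := 4) (by norm_num)).mul_left 6) using 2 with x
  ring

theorem summable_inv_norm_sub_pow_three (hτ : 0 < τ.im) (z : ℂ) :
    Summable fun x : ℤ × ℤ ↦ (‖z - (x.1 + x.2 * τ)‖ ^ 3)⁻¹ := by
  refine (hasSum_int_prod_of_hasSum_lattice hτ (f := fun l ↦ (‖z - l‖ ^ 3)⁻¹)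
    (Summable.hasSum ?_)).summable
  refine (ZLattice.summable_norm_sub_zpow (unitPeriodPair τ hτ).lattice (-3) (by simp) z).congr
    fun l ↦ ?_
  rw [norm_sub_rev, zpow_neg]
  rfl

end UnitPeriodPair

section TauDerivative

/-- The series obtained from `℘′(z|τ) = ∑ -2 / (z - m - nτ)³` by differentiating each term
in `τ`. -/
noncomputable def wpdTau (τ z : ℂ) : ℂ :=
  ∑' x : ℤ × ℤ, -6 * x.2 / (z - (x.1 + x.2 * τ)) ^ 4

variable {τ : ℂ}

theorem exists_norm_intCast_le_mul_norm_sub (hτ : 0 < τ.im) {z : ℂ}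
    (hz : ∀ m n : ℤ, n ≠ 0 → z ≠ m + n * τ) :
    ∃ C > 0, ∀ x : ℤ × ℤ, ‖(x.2 : ℂ)‖ ≤ C * ‖z - (x.1 + x.2 * τ)‖ := by
  let S : Set ℂ := {w | ∃ m n : ℤ, n ≠ 0 ∧ w = m + n * τ}
  have hS : IsClosed S := (unitPeriodPair τ hτ).isClosed_of_subset_lattice (by
    rintro w ⟨m, n, -, hw⟩
    exact (mem_lattice_unitPeriodPair hτ).mpr ⟨m, n, hw⟩)
  obtain ⟨d, hd, hball⟩ := Metric.isOpen_iff.mp hS.isOpen_compl z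
    fun ⟨m, n, hn, hw⟩ ↦ hz m n hn hw
  refine ⟨(‖z‖ / d + 1) / τ.im, by positivity, fun x ↦ ?_⟩
  by_cases hx : x.2 = 0
  · simp only [hx, Int.cast_zero, norm_zero]
    positivity
  have hdist : d ≤ ‖z - (x.1 + x.2 * τ)‖ := by
    by_contra! h
    exact hball (a := (x.1 + x.2 * τ : ℂ)) (by rwa [mem_ball_iff_norm'])
      ⟨x.1, x.2, hx, rfl⟩
  have him : ‖(x.2 : ℂ)‖ * τ.im ≤ ‖z‖ + ‖z - (x.1 + x.2 * τ)‖ := by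
    calc ‖(x.2 : ℂ)‖ * τ.im = |(x.1 + x.2 * τ : ℂ).im| := by simp [abs_mul, abs_of_pos hτ]
      _ ≤ ‖(x.1 + x.2 * τ : ℂ)‖ := Complex.abs_im_le_norm _
      _ ≤ ‖z‖ + ‖z - (x.1 + x.2 * τ)‖ := norm_le_norm_add_norm_sub _ _
  rw [div_mul_eq_mul_div, le_div_iff₀ hτ]
  calc ‖(x.2 : ℂ)‖ * τ.im ≤ ‖z‖ + ‖z - (x.1 + x.2 * τ)‖ := him
    _ = ‖z‖ / d * d + ‖z - (x.1 + x.2 * τ)‖ := by rw [div_mul_cancel₀ _ hd.ne']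
    _ ≤ ‖z‖ / d * ‖z - (x.1 + x.2 * τ)‖ + ‖z - (x.1 + x.2 * τ)‖ := by gcongr
    _ = (‖z‖ / d + 1) * ‖z - (x.1 + x.2 * τ)‖ := by ring

theorem norm_le_two_mul_norm_of_norm_sub_le {n v w : ℂ} {C : ℝ} (hC : 0 < C)
    (hn : ‖n‖ ≤ C * ‖w‖) (hvw : ‖w - v‖ ≤ ‖n‖ * (1 / (2 * C))) : ‖w‖ ≤ 2 * ‖v‖ := by
  have hhalf : ‖w - v‖ ≤ ‖w‖ / 2 := by
    calc ‖w - v‖ ≤ C * ‖w‖ * (1 / (2 * C)) := hvw.trans (by gcongr)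
      _ = ‖w‖ / 2 := by field_simp
  linarith [norm_sub_norm_le w v]

theorem norm_neg_six_mul_div_pow_four_le {n v w : ℂ} {C : ℝ} (hC : 0 < C) (hn : ‖n‖ ≤ C * ‖w‖)
    (hvw : ‖w‖ ≤ 2 * ‖v‖) : ‖-6 * n / v ^ 4‖ ≤ 96 * C * (‖w‖ ^ 3)⁻¹ := by
  rcases eq_or_ne w 0 with rfl | hw
  · have : n = 0 := by simpa using hn
    simp [this]
  have : 0 < ‖w‖ := norm_pos_iff.mpr hw
  calc ‖-6 * n / v ^ 4‖ = 6 * ‖n‖ / ‖v‖ ^ 4 := by simp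
    _ ≤ 6 * (C * ‖w‖) / (‖w‖ / 2) ^ 4 := by gcongr; linarith
    _ = 96 * C * (‖w‖ ^ 3)⁻¹ := by field_simp; norm_num

theorem summable_wpdTau (hτ : 0 < τ.im) {z : ℂ} (hz : ∀ m n : ℤ, n ≠ 0 → z ≠ m + n * τ) :
    Summable fun x : ℤ × ℤ ↦ -6 * (x.2 : ℂ) / (z - (x.1 + x.2 * τ)) ^ 4 := by
  obtain ⟨C, hC, h⟩ := exists_norm_intCast_le_mul_norm_sub hτ hz
  exact .of_norm_bounded ((summable_inv_norm_sub_pow_three hτ z).mul_left (96 * C)) fun x ↦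
    norm_neg_six_mul_div_pow_four_le hC (h x) (le_mul_of_one_le_left (norm_nonneg _) one_le_two)

theorem differentiableAt_wpdTau (hτ : 0 < τ.im) {z : ℂ} (hz : ∀ m n : ℤ, n ≠ 0 → z ≠ m + n * τ) :
    DifferentiableAt ℂ (wpdTau τ) z := by
  obtain ⟨C, hC, h⟩ := exists_norm_intCast_le_mul_norm_sub hτ hz
  have hr : 0 < 1 / (2 * C) := by positivity
  have hcmp {x : ℤ × ℤ} (hx : x.2 ≠ 0) {y : ℂ} (hy : y ∈ Metric.ball z (1 / (2 * C))) :
      ‖z - (x.1 + x.2 * τ)‖ ≤ 2 * ‖y - (x.1 + x.2 * τ)‖ := by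
    refine norm_le_two_mul_norm_of_norm_sub_le hC (h x) ?_
    have hone : 1 ≤ ‖(x.2 : ℂ)‖ := by
      rw [Complex.norm_intCast]
      exact_mod_cast Int.one_le_abs hx
    rw [sub_sub_sub_cancel_right]
    exact (mem_ball_iff_norm'.mp hy).le.trans (le_mul_of_one_le_left hr.le hone)
  suffices DifferentiableOn ℂ (wpdTau τ) (Metric.ball z (1 / (2 * C))) from
    this.differentiableAt (Metric.ball_mem_nhds z hr)
  refine differentiableOn_tsum_of_summable_norm
    ((summable_inv_norm_sub_pow_three hτ z).mul_left (96 * C)) (fun x ↦ ?_) Metric.isOpen_ball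
    fun x y hy ↦ ?_ <;> by_cases hx : x.2 = 0
  · simp [hx]
  · intro y hy
    have hy₀ : y - (x.1 + x.2 * τ) ≠ 0 := fun hy₀ ↦
      hz x.1 x.2 hx <| sub_eq_zero.mp <| by simpa [hy₀] using hcmp hx hy
    have hterm : DifferentiableAt ℂ (fun y ↦ -6 * (x.2 : ℂ) / (y - (x.1 + x.2 * τ)) ^ 4) y := by
      fun_prop (disch := exact pow_ne_zero 4 hy₀)
    exact hterm.differentiableWithinAt
  · simp only [hx, Int.cast_zero, mul_zero, zero_div, norm_zero]
    positivity
  · exact norm_neg_six_mul_div_pow_four_le hC (h x) (hcmp hx hy)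

theorem hasDerivAt_neg_two_div_pow_three {a n t : ℂ} (h : a - n * t ≠ 0) :
    HasDerivAt (fun t ↦ -2 / (a - n * t) ^ 3) (-6 * n / (a - n * t) ^ 4) t := by
  have hlin : HasDerivAt (fun t ↦ a - n * t) (-n) t := by
    simpa using ((hasDerivAt_id t).const_mul n).const_sub a
  convert! (hasDerivAt_const t (-2 : ℂ)).fun_div (hlin.fun_pow 3) (pow_ne_zero 3 h) using 1
  field_simp
  push_cast
  ring

theorem hasDerivAt_wpd_tau (hτ : 0 < τ.im) {z : ℂ} (hz : ¬ InLattice τ z) :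
    HasDerivAt (fun t ↦ wpd t z) (wpdTau τ z) τ := by
  obtain ⟨C, hC, h⟩ := exists_norm_intCast_le_mul_norm_sub hτ (z := z)
    fun m n _ hmn ↦ hz ⟨m, n, hmn⟩
  have hcmp (x : ℤ × ℤ) {t : ℂ} (ht : t ∈ Metric.ball τ (1 / (2 * C))) :
      ‖z - (x.1 + x.2 * τ)‖ ≤ 2 * ‖z - (x.1 + x.2 * t)‖ := by
    refine norm_le_two_mul_norm_of_norm_sub_le hC (h x) ?_
    rw [sub_sub_sub_cancel_left, add_sub_add_left_eq_sub, ← mul_sub, norm_mul]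
    gcongr
    exact (mem_ball_iff_norm.mp ht).le
  have hτ_mem : τ ∈ Metric.ball τ (1 / (2 * C)) := Metric.mem_ball_self (by positivity)
  have hderiv := hasDerivAt_tsum_of_isPreconnected
    (g := fun (x : ℤ × ℤ) t ↦ -2 / (z - (x.1 + x.2 * t)) ^ 3)
    (g' := fun (x : ℤ × ℤ) t ↦ -6 * x.2 / (z - (x.1 + x.2 * t)) ^ 4)
    ((summable_inv_norm_sub_pow_three hτ z).mul_left (96 * C)) Metric.isOpen_ball
    (convex_ball τ _).isPreconnected (fun x t ht ↦ ?_)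
    (fun x t ht ↦ norm_neg_six_mul_div_pow_four_le hC (h x) (hcmp x ht)) hτ_mem
    (hasSum_wpd hτ z).summable hτ_mem
  · refine hderiv.congr_of_eventuallyEq ?_
    filter_upwards [Complex.continuous_im.continuousAt.eventually_const_lt hτ] with t ht
    exact (hasSum_wpd ht z).tsum_eq.symm
  · simp only [← sub_sub]
    refine hasDerivAt_neg_two_div_pow_three fun ht₀ ↦ hz ⟨x.1, x.2, sub_eq_zero.mp ?_⟩
    simpa [← sub_sub, ht₀] using hcmp x ht

theorem wpdTau_neg (τ z : ℂ) : wpdTau τ (-z) = -wpdTau τ z := by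
  rw [wpdTau, wpdTau, ← (Equiv.neg (ℤ × ℤ)).tsum_eq, ← tsum_neg]
  refine tsum_congr fun x ↦ ?_
  have hsub : -z - ((-x).1 + (-x).2 * τ : ℂ) = -(z - (x.1 + x.2 * τ)) := by
    push_cast [Prod.fst_neg, Prod.snd_neg]
    ring
  simp only [Equiv.neg_apply, Prod.fst_neg, Prod.snd_neg, Int.cast_neg] at hsub ⊢
  rw [hsub]
  ring

theorem wpdTau_add_one (τ z : ℂ) : wpdTau τ (z + 1) = wpdTau τ z := by
  rw [wpdTau, wpdTau, ← (Equiv.addRight ((1, 0) : ℤ × ℤ)).tsum_eq]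
  refine tsum_congr fun x ↦ ?_
  simp only [Equiv.coe_addRight, Prod.fst_add, Prod.snd_add, Int.cast_add, add_zero, Int.cast_one]
  congr 2
  ring

theorem wpdTau_add_tau (hτ : 0 < τ.im) {z : ℂ} (hz : ¬ InLattice τ z) :
    wpdTau τ (z + τ) = wpdTau τ z - deriv (wpd τ) z := by
  have hsum := (summable_wpdTau hτ fun m n _ hmn ↦ hz ⟨m, n, hmn⟩).hasSum.sub
    (hasSum_deriv_wpd hτ hz)
  refine Eq.trans ?_ hsum.tsum_eq
  rw [wpdTau, ← (Equiv.addRight ((0, 1) : ℤ × ℤ)).tsum_eq]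
  refine tsum_congr fun x ↦ ?_
  simp only [Equiv.coe_addRight, Prod.fst_add, Prod.snd_add, Int.cast_add, add_zero, Int.cast_one]
  rw [show z + τ - (x.1 + (x.2 + 1) * τ) = z - (x.1 + x.2 * τ) by ring]
  ring

end TauDerivative

section Legendre

theorem integral_horizontal_sub_of_tendsto_mul {f : ℂ → ℂ} {a h : ℝ} (ha : a < 0) (ha' : 0 < a + 1)
    (hh : 0 < h) (hf : DifferentiableOn ℂ f ((Set.Icc a (a + 1) ×ℂ Set.Icc (-h) h) \ {0}))
    (hside : ∀ y ∈ Set.Icc (-h) h, f (a + y * I) = f ((a + 1 : ℝ) + y * I))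
    (hpole : Tendsto (fun z ↦ z * f z) (𝓝[≠] 0) (𝓝 1)) :
    (∫ x : ℝ in a..a + 1, f (x + (-h : ℝ) * I)) - ∫ x : ℝ in a..a + 1, f (x + h * I) =
      2 * Real.pi * I := by
  let ψ : ℂ → ℂ := fun z ↦ f z - periodicPole z
  let ψ₀ : ℂ → ℂ := Function.update ψ 0 (limUnder (𝓝[≠] 0) ψ)
  have hψ₀ {x y : ℝ} (hxy : x ≠ 0 ∨ y ≠ 0) : ψ₀ (x + y * I) = ψ (x + y * I) :=
    Function.update_of_ne (by simpa [Complex.ext_iff, or_iff_not_imp_left] using hxy) ..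
  have hψ₀_diff : DifferentiableOn ℂ ψ₀ (Set.Icc a (a + 1) ×ℂ Set.Icc (-h) h) := by
    refine differentiableOn_update_limUnder_of_tendsto_smul ?_ (hf.fun_sub fun z hz ↦ ?_) ?_
    · exact inter_mem (continuous_re.continuousAt.preimage_mem_nhds (Icc_mem_nhds ha ha'))
        (continuous_im.continuousAt.preimage_mem_nhds (Icc_mem_nhds (neg_neg_of_pos hh) hh))
    · refine (differentiableAt_periodicPole fun n hn ↦ hz.2 ?_).differentiableWithinAt
      obtain ⟨hn_lower, hn_upper⟩ : a ≤ n ∧ n ≤ a + 1 := by simpa [hn] using hz.1.1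
      have hn_gt : (-1 : ℤ) < n := by exact_mod_cast show (-1 : ℝ) < n by linarith
      have hn_lt : n < 1 := by exact_mod_cast show (n : ℝ) < 1 by linarith
      simp [hn, show n = 0 by lia]
    · simpa [ψ, mul_sub] using hpole.sub tendsto_mul_periodicPole
  have hint {y : ℝ} (hy : y ∈ Set.Icc (-h) h) (hy₀ : y ≠ 0) :
      ∫ x : ℝ in a..a + 1, ψ₀ (x + y * I) =
        (∫ x : ℝ in a..a + 1, f (x + y * I)) - ∫ x : ℝ in a..a + 1, periodicPole (x + y * I) := by
    simp only [hψ₀ (.inr hy₀), ψ]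
    refine intervalIntegral.integral_sub (ContinuousOn.intervalIntegrable ?_)
      ((continuous_periodicPole_horizontal hy₀).intervalIntegrable _ _)
    rw [Set.uIcc_of_le (by linarith)]
    exact hf.continuousOn.comp (f := fun x : ℝ ↦ (x + y * I : ℂ)) (by fun_prop) fun x hx ↦
      ⟨by simpa [mem_reProdIm] using ⟨hx, hy⟩, by simp [Complex.ext_iff, hy₀]⟩
  have hrect := integral_horizontal_eq_of_vertical_sides_eq (f := ψ₀) (a := a) (b := a + 1)
    (y₁ := -h) (y₂ := h) (by rwa [Set.uIcc_of_le (by linarith), Set.uIcc_of_le (by linarith)])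
    fun y hy ↦ by
      rw [Set.uIcc_of_le (by linarith)] at hy
      rw [hψ₀ (.inl ha.ne), hψ₀ (.inl ha'.ne')]
      simp only [ψ, hside y hy, ← periodicPole_add_one (a + y * I), ofReal_add, ofReal_one,
        add_right_comm]
  rw [hint (by constructor <;> linarith) (by linarith), hint (by constructor <;> linarith) hh.ne',
    integral_periodicPole_of_pos hh, integral_periodicPole_of_neg (neg_neg_of_pos hh)] at hrect
  linear_combination hrect

theorem integral_horizontal_add_period {φ : ℂ → ℂ} {τ κ : ℂ} {y : ℝ}
    (hφ : Continuous fun x : ℝ ↦ φ (x + y * I))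
    (h₁ : ∀ x : ℝ, φ (x + y * I + 1) = φ (x + y * I))
    (hκ : ∀ x : ℝ, φ (x + y * I + τ) = φ (x + y * I) + κ) (a : ℝ) :
    ∫ x : ℝ in a..a + 1, φ (x + (y + τ.im : ℝ) * I) =
      (∫ x : ℝ in a..a + 1, φ (x + y * I)) + κ := by
  have hper : Function.Periodic (fun x : ℝ ↦ φ (x + y * I)) 1 := fun x ↦ by
    simpa only [ofReal_add, ofReal_one, add_right_comm] using h₁ x
  have hshift (x : ℝ) : φ (x + (y + τ.im : ℝ) * I) = φ ((x - τ.re : ℝ) + y * I) + κ := by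
    rw [← hκ]
    congr 1
    apply Complex.ext <;> simp
  have hint : IntervalIntegrable (fun x : ℝ ↦ φ ((x - τ.re : ℝ) + y * I)) MeasureTheory.volume a
      (a + 1) := (hφ.comp (continuous_sub_right τ.re)).intervalIntegrable _ _
  simp only [hshift]
  rw [intervalIntegral.integral_add hint intervalIntegrable_const,
    intervalIntegral.integral_comp_sub_right (fun x : ℝ ↦ φ (x + y * I)),
    add_sub_right_comm, hper.intervalIntegral_add_eq (a - τ.re) a]
  simp

theorem InLattice.exists_eq_intCast {τ z : ℂ} (h : InLattice τ z) (hz : |z.im| < τ.im) :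
    ∃ m : ℤ, z = m := by
  obtain ⟨m, n, rfl⟩ := h
  have hτ : 0 < τ.im := (abs_nonneg _).trans_lt hz
  have hn : |(n : ℝ)| * τ.im < 1 * τ.im := by simpa [abs_mul, abs_of_pos hτ] using hz
  have hn₀ : n = 0 := Int.abs_lt_one_iff.mp (by exact_mod_cast lt_of_mul_lt_mul_right hn hτ.le)
  exact ⟨m, by simp [hn₀]⟩

theorem not_inLattice_of_abs_im_lt {τ z : ℂ} (hz : |z.im| < τ.im) (hre : |z.re| < 1)
    (hz₀ : z ≠ 0) : ¬ InLattice τ z := fun hmem ↦ by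
  obtain ⟨m, rfl⟩ := hmem.exists_eq_intCast hz
  have hm : m = 0 := Int.abs_lt_one_iff.mp (by exact_mod_cast hre)
  exact hz₀ (by simp [hm])

theorem quasiPeriod_eq_neg_two_pi_I {τ κ : ℂ} (hτ : 0 < τ.im) {φ : ℂ → ℂ}
    (hφ : ∀ z, ¬ InLattice τ z → DifferentiableAt ℂ φ z)
    (hpole : Tendsto (fun z ↦ z * φ z) (𝓝[≠] 0) (𝓝 1))
    (h₁ : ∀ z, ¬ InLattice τ z → φ (z + 1) = φ z)
    (hκ : ∀ z, ¬ InLattice τ z → φ (z + τ) = φ z + κ) : κ = -(2 * Real.pi * I) := by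
  have hτ_half : |(-(τ.im / 2))| < τ.im := by rw [abs_neg, abs_of_pos (half_pos hτ)]; linarith
  have habs_im {z : ℂ} (hz : z.im ∈ Set.Icc (-(τ.im / 2)) (τ.im / 2)) : |z.im| < τ.im :=
    (abs_le.mpr hz).trans_lt (half_lt_self hτ)
  have hline (x : ℝ) : ¬ InLattice τ (x + (-(τ.im / 2) : ℝ) * I) := fun hmem ↦ by
    obtain ⟨m, hm⟩ := hmem.exists_eq_intCast (by simpa using hτ_half)
    simpa [hτ.ne'] using congrArg im hm
  have hcont : Continuous fun x : ℝ ↦ φ (x + (-(τ.im / 2) : ℝ) * I) :=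
    continuous_iff_continuousAt.mpr fun x ↦ (hφ _ (hline x)).continuousAt.comp
      (f := fun x : ℝ ↦ (x + (-(τ.im / 2) : ℝ) * I : ℂ)) (by fun_prop)
  have htop := integral_horizontal_add_period hcont (fun x ↦ h₁ _ (hline x))
    (fun x ↦ hκ _ (hline x)) (-1 / 2)
  have hres := integral_horizontal_sub_of_tendsto_mul (f := φ) (a := -1 / 2) (h := τ.im / 2)
    (by norm_num) (by norm_num) (half_pos hτ) (fun z hz ↦ ?_) (fun y hy ↦ ?_) hpole
  · rw [neg_add_eq_sub, sub_half] at htop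
    linear_combination -hres - htop
  · have hre : |z.re| < 1 := by
      rw [abs_lt]
      constructor <;> linarith [hz.1.1.1, hz.1.1.2]
    exact (hφ z (not_inLattice_of_abs_im_lt (habs_im hz.1.2) hre hz.2)).differentiableWithinAt
  · have hmem : ¬ InLattice τ ((-1 / 2 : ℝ) + y * I) :=
      not_inLattice_of_abs_im_lt (habs_im (by simpa using hy)) (by norm_num)
        (ne_of_apply_ne re (by norm_num))
    rw [← h₁ _ hmem, ofReal_add, ofReal_one, add_right_comm]

end Legendre

section ZetaFunction

open scoped PeriodPair

theorem natCast_succ_le_analyticOrderAt_of_deriv {f g : ℂ → ℂ} {c : ℂ} {n : ℕ}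
    (hf : AnalyticAt ℂ f c) (hc : f c = 0) (hderiv : deriv f =ᶠ[𝓝 c] g)
    (hg : n ≤ analyticOrderAt g c) : (n + 1 : ℕ) ≤ analyticOrderAt f c := by
  have horder := hf.analyticOrderAt_deriv_add_one
  simp only [hc, sub_zero, analyticOrderAt_congr hderiv] at horder
  rw [← horder, Nat.cast_add, Nat.cast_one]
  gcongr

variable (L : PeriodPair)

theorem one_le_analyticOrderAt_derivWeierstrassPExcept_zero :
    (1 : ℕ) ≤ analyticOrderAt (L.derivWeierstrassPExcept 0) 0 := by
  simpa [Order.one_le_iff_ne_zero] using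
    (L.analyticAt_derivWeierstrassPExcept 0).analyticOrderAt_ne_zero.mpr (by simp)

theorem two_le_analyticOrderAt_weierstrassPExcept_zero :
    (2 : ℕ) ≤ analyticOrderAt (L.weierstrassPExcept 0) 0 :=
  natCast_succ_le_analyticOrderAt_of_deriv (L.analyticAt_weierstrassPExcept 0) (by simp)
    (eventually_of_mem (L.compl_lattice_sdiff_singleton_mem_nhds 0)
      (L.eqOn_deriv_weierstrassPExcept_derivWeierstrassPExcept 0))
    (one_le_analyticOrderAt_derivWeierstrassPExcept_zero L)

variable {L} {ζ : ℂ → ℂ}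

theorem exists_analyticAt_eq_inv_add_pow_three_mul
    (hζ : ∀ z ∉ L.lattice, HasDerivAt ζ (-℘[L] z) z)
    (hlim : Tendsto (fun z ↦ ζ z - z⁻¹) (𝓝[≠] 0) (𝓝 0)) :
    ∃ C : ℂ → ℂ, AnalyticAt ℂ C 0 ∧ ∀ᶠ z in 𝓝[≠] 0, ζ z = z⁻¹ + z ^ 3 * C z := by
  let ρ : ℂ → ℂ := Function.update (fun z ↦ ζ z - z⁻¹) 0 0
  have hρ_eq : ρ =ᶠ[𝓝[≠] 0] fun z ↦ ζ z - z⁻¹ := by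
    filter_upwards [self_mem_nhdsWithin] with z hz using Function.update_of_ne hz ..
  have hdiff : ∀ᶠ z in 𝓝[≠] (0 : ℂ),
      HasDerivAt (fun z ↦ ζ z - z⁻¹) (-L.weierstrassPExcept 0 z) z := by
    filter_upwards [eventually_notMem_lattice L 0, self_mem_nhdsWithin] with z hz hz₀
    refine ((hζ z hz).fun_sub (hasDerivAt_inv hz₀)).congr_deriv ?_
    rw [weierstrassP_eq_weierstrassPExcept_zero_add]
    ring
  have hderiv : deriv ρ =ᶠ[𝓝[≠] 0] -L.weierstrassPExcept 0 :=
    hρ_eq.nhdsNE_deriv.trans (hdiff.mono fun z hz ↦ hz.deriv)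
  have hρ : AnalyticAt ℂ ρ 0 := by
    refine analyticAt_of_differentiable_on_punctured_nhds_of_continuousAt ?_
      (continuousAt_update_same.mpr hlim)
    filter_upwards [hdiff, self_mem_nhdsWithin] with z hz hz₀
    exact hz.differentiableAt.congr_of_eventuallyEq <|
      (eventually_ne_nhds hz₀).mono fun w hw ↦ Function.update_of_ne hw ..
  have hderiv' := (hρ.deriv.frequently_eq_iff_eventually_eq
    (L.analyticAt_weierstrassPExcept 0).neg).mp hderiv.frequently
  obtain ⟨C, hC, hρC⟩ := (natCast_le_analyticOrderAt hρ).mp <|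
    natCast_succ_le_analyticOrderAt_of_deriv hρ (by simp [ρ]) hderiv' <| by
      simpa only [analyticOrderAt_neg] using two_le_analyticOrderAt_weierstrassPExcept_zero L
  refine ⟨C, hC, ?_⟩
  filter_upwards [hρ_eq, nhdsWithin_le_nhds hρC] with z hz hzC
  rw [hz, sub_zero, smul_eq_mul] at hzC
  linear_combination hzC

theorem exists_apply_add_eq_add_const
    (hζ : ∀ z ∉ L.lattice, HasDerivAt ζ (-℘[L] z) z) {l : ℂ} (hl : l ∈ L.lattice) :
    ∃ κ : ℂ, ∀ z ∉ L.lattice, ζ (z + l) = ζ z + κ := by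
  have hdiff : ∀ z ∈ (L.lattice : Set ℂ)ᶜ, HasDerivAt (fun z ↦ ζ (z + l) - ζ z) 0 z := by
    intro z hz
    have hzl : z + l ∉ L.lattice := mt (L.lattice.add_mem_iff_left hl).mp hz
    refine (((hζ _ hzl).comp_add_const z l).fun_sub (hζ z hz)).congr_deriv ?_
    rw [L.weierstrassP_add_coe z ⟨l, hl⟩, sub_self]
  obtain ⟨κ, hκ⟩ := L.isClosed_lattice.isOpen_compl.exists_is_const_of_deriv_eq_zero
    (isPreconnected_compl_lattice L)
    (fun z hz ↦ (hdiff z hz).differentiableAt.differentiableWithinAt)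
    (fun z hz ↦ (hdiff z hz).deriv)
  exact ⟨κ, fun z hz ↦ by linear_combination hκ z hz⟩

end ZetaFunction

section HeatBracket

open scoped PeriodPair

/-- The elliptic bracket on the right-hand side of the formula for `∂℘′/∂τ`, for an arbitrary
period lattice and with the zeta function and its first quasi-period as parameters. -/
noncomputable def heatBracket (L : PeriodPair) (ζ : ℂ → ℂ) (η z : ℂ) : ℂ :=
  6 * (℘[L] z - η) * ℘'[L] z + (ζ z - z * η) * (12 * ℘[L] z ^ 2 - L.g₂)

variable {L : PeriodPair} {ζ : ℂ → ℂ} {η : ℂ}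

theorem heatBracket_neg (hodd : ∀ z, ζ (-z) = -ζ z) (z : ℂ) :
    heatBracket L ζ η (-z) = -heatBracket L ζ η z := by
  simp only [heatBracket, hodd, L.weierstrassP_neg, L.derivWeierstrassP_neg]
  ring

theorem heatBracket_add {l κ z : ℂ} (hl : l ∈ L.lattice) (hκ : ζ (z + l) = ζ z + κ) :
    heatBracket L ζ η (z + l) =
      heatBracket L ζ η z + (κ - l * η) * (12 * ℘[L] z ^ 2 - L.g₂) := by
  rw [heatBracket, heatBracket, hκ, L.weierstrassP_add_coe z ⟨l, hl⟩,
    L.derivWeierstrassP_add_coe z ⟨l, hl⟩]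
  ring

theorem differentiableAt_heatBracket {z : ℂ} (hz : z ∉ L.lattice) (hζ : DifferentiableAt ℂ ζ z) :
    DifferentiableAt ℂ (heatBracket L ζ η) z := by
  have hP := (L.analyticOnNhd_weierstrassP z hz).differentiableAt
  have hP' := (L.analyticOnNhd_derivWeierstrassP z hz).differentiableAt
  unfold heatBracket
  fun_prop

-- The primitive is regular at `0`, hence so is the bracket: its poles need not be expanded.
theorem hasDerivAt_primitive_heatBracket {z : ℂ} (hz : z ∉ L.lattice)
    (hζ : HasDerivAt ζ (-℘[L] z) z) :
    HasDerivAt (fun z ↦ 2 * (ζ z - z * η) * ℘'[L] z + 4 * ℘[L] z ^ 2 - 4 * η * ℘[L] z)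
      (heatBracket L ζ η z) z := by
  have hP := hasDerivAt_weierstrassP L hz
  have hP' := (L.analyticOnNhd_derivWeierstrassP z hz).differentiableAt.hasDerivAt
  have hZ := hζ.fun_sub ((hasDerivAt_id' z).mul_const η)
  refine ((((hZ.const_mul 2).fun_mul hP').fun_add ((hP.fun_pow 2).const_mul 4)).fun_sub
    (hP.const_mul (4 * η))).congr_deriv ?_
  rw [heatBracket, ← two_mul_deriv_derivWeierstrassP L hz]
  push_cast
  ring

theorem exists_analyticAt_primitive_heatBracket
    (hζ : ∀ z ∉ L.lattice, HasDerivAt ζ (-℘[L] z) z)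
    (hlim : Tendsto (fun z ↦ ζ z - z⁻¹) (𝓝[≠] 0) (𝓝 0)) :
    ∃ H : ℂ → ℂ, AnalyticAt ℂ H 0 ∧
      (fun z ↦ 2 * (ζ z - z * η) * ℘'[L] z + 4 * ℘[L] z ^ 2 - 4 * η * ℘[L] z) =ᶠ[𝓝[≠] 0] H := by
  obtain ⟨A, hA, hPA⟩ := (natCast_le_analyticOrderAt (L.analyticAt_weierstrassPExcept 0)).mp
    (two_le_analyticOrderAt_weierstrassPExcept_zero L)
  obtain ⟨B, hB, hPB⟩ := (natCast_le_analyticOrderAt (L.analyticAt_derivWeierstrassPExcept 0)).mp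
    (one_le_analyticOrderAt_derivWeierstrassPExcept_zero L)
  obtain ⟨C, hC, hζC⟩ := exists_analyticAt_eq_inv_add_pow_three_mul hζ hlim
  refine ⟨fun z ↦ 2 * B z + 2 * z ^ 4 * B z * C z - 4 * C z - 2 * η * z ^ 2 * B z +
    4 * z ^ 4 * A z ^ 2 + 8 * A z - 4 * η * z ^ 2 * A z, by fun_prop, ?_⟩
  filter_upwards [self_mem_nhdsWithin, nhdsWithin_le_nhds hPA, nhdsWithin_le_nhds hPB, hζC]
    with z (hz : z ≠ 0) hzA hzB hzC
  rw [weierstrassP_eq_weierstrassPExcept_zero_add,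
    derivWeierstrassP_eq_derivWeierstrassPExcept_zero_sub, hzA, hzB, hzC]
  simp only [sub_zero, smul_eq_mul]
  field_simp
  ring

theorem tendsto_mul_heatBracket (hζ : ∀ z ∉ L.lattice, HasDerivAt ζ (-℘[L] z) z)
    (hlim : Tendsto (fun z ↦ ζ z - z⁻¹) (𝓝[≠] 0) (𝓝 0)) :
    Tendsto (fun z ↦ z * heatBracket L ζ η z) (𝓝[≠] 0) (𝓝 0) := by
  obtain ⟨H, hH, hHeq⟩ := exists_analyticAt_primitive_heatBracket (η := η) hζ hlim
  have hderiv : deriv H =ᶠ[𝓝[≠] 0] heatBracket L ζ η := by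
    filter_upwards [hHeq.nhdsNE_deriv, eventually_notMem_lattice L 0] with z hHz hz
    rw [← hHz, (hasDerivAt_primitive_heatBracket hz (hζ z hz)).deriv]
  have htendsto : Tendsto (fun z ↦ z * deriv H z) (𝓝 0) (𝓝 0) := by
    simpa using (continuousAt_id.fun_mul hH.deriv.continuousAt).tendsto
  exact (htendsto.mono_left nhdsWithin_le_nhds).congr' (hderiv.mono fun z hz ↦ by rw [hz])

end HeatBracket

section HeatEquation

variable {τ : ℂ} {zeta : ℂ → ℂ → ℂ} {eta1 : ℂ → ℂ}

theorem IsWeierstrassZeta.hasDerivAt_of_notMem_lattice (hzeta : IsWeierstrassZeta zeta)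
    (hτ : 0 < τ.im) {z : ℂ} (hz : z ∉ (unitPeriodPair τ hτ).lattice) :
    HasDerivAt (zeta τ) (-(unitPeriodPair τ hτ).weierstrassP z) z := by
  rw [← wp_eq_weierstrassP hτ]
  exact (hzeta τ hτ).2.1 z (mt (mem_lattice_unitPeriodPair hτ).mpr hz)

theorem IsWeierstrassZeta.tendsto_mul (hzeta : IsWeierstrassZeta zeta) (hτ : 0 < τ.im) :
    Tendsto (fun z ↦ z * zeta τ z) (𝓝[≠] 0) (𝓝 1) := by
  have hid : Tendsto (fun z : ℂ ↦ z) (𝓝[≠] 0) (𝓝 0) := nhdsWithin_le_nhds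
  have hlim := (hid.mul (hzeta τ hτ).2.2).add_const 1
  rw [mul_zero, zero_add] at hlim
  refine hlim.congr' ?_
  filter_upwards [self_mem_nhdsWithin] with z (hz : z ≠ 0)
  field_simp
  ring

theorem IsWeierstrassZeta.add_tau (hzeta : IsWeierstrassZeta zeta) (heta1 : IsEta1 zeta eta1)
    (hτ : 0 < τ.im) {z : ℂ} (hz : ¬ InLattice τ z) :
    zeta τ (z + τ) = zeta τ z + (τ * eta1 τ - 2 * Real.pi * I) := by
  obtain ⟨κ, hκ⟩ := exists_apply_add_eq_add_const
    (fun _ ↦ hzeta.hasDerivAt_of_notMem_lattice hτ) (unitPeriodPair τ hτ).ω₂_mem_lattice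
  have hκ' : ∀ w, ¬ InLattice τ w → zeta τ (w + τ) = zeta τ w + κ := fun w hw ↦
    hκ w (mt (mem_lattice_unitPeriodPair hτ).mp hw)
  have hpole : Tendsto (fun z ↦ z * (zeta τ z - z * eta1 τ)) (𝓝[≠] 0) (𝓝 1) := by
    have hsq : Tendsto (fun z : ℂ ↦ z ^ 2 * eta1 τ) (𝓝 0) (𝓝 0) :=
      Continuous.tendsto' (by fun_prop) _ _ (by simp)
    convert (hzeta.tendsto_mul hτ).sub (hsq.mono_left nhdsWithin_le_nhds) using 2 with z
    · ring
    · simp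
  have hperiod := quasiPeriod_eq_neg_two_pi_I (φ := fun z ↦ zeta τ z - z * eta1 τ)
    (κ := κ - τ * eta1 τ) hτ
    (fun w hw ↦ ((hzeta τ hτ).2.1 w hw).differentiableAt.fun_sub (by fun_prop)) hpole
    (fun w hw ↦ by linear_combination -heta1 τ hτ w hw)
    (fun w hw ↦ by linear_combination hκ' w hw)
  rw [hκ' z hz]
  linear_combination hperiod

theorem tendsto_mul_wpdTau (hτ : 0 < τ.im) :
    Tendsto (fun z ↦ z * wpdTau τ z) (𝓝[≠] 0) (𝓝 0) := by
  have hdiff : DifferentiableAt ℂ (wpdTau τ) 0 := by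
    refine differentiableAt_wpdTau hτ fun m n hn hmn ↦ ?_
    simpa [hτ.ne', hn] using congrArg im hmn
  have hcont := continuousAt_id.fun_mul hdiff.continuousAt
  simpa using hcont.tendsto.mono_left nhdsWithin_le_nhds

theorem neg_I_div_four_mul_pi_mul : -I / (4 * Real.pi) * (4 * Real.pi * I) = 1 := by
  have hpi : (Real.pi : ℂ) ≠ 0 := by exact_mod_cast Real.pi_ne_zero
  field_simp
  rw [I_sq, neg_neg]

theorem heatBracket_add_tau (hzeta : IsWeierstrassZeta zeta) (heta1 : IsEta1 zeta eta1)
    (hτ : 0 < τ.im) {z : ℂ} (hz : ¬ InLattice τ z) :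
    heatBracket (unitPeriodPair τ hτ) (zeta τ) (eta1 τ) (z + τ) =
      heatBracket (unitPeriodPair τ hτ) (zeta τ) (eta1 τ) z -
        4 * Real.pi * I * deriv (wpd τ) z := by
  rw [heatBracket_add (l := τ) (unitPeriodPair τ hτ).ω₂_mem_lattice (hzeta.add_tau heta1 hτ hz),
    ← two_mul_deriv_derivWeierstrassP _ (mt (mem_lattice_unitPeriodPair hτ).mp hz),
    ← wpd_eq_derivWeierstrassP hτ]
  ring

theorem wpdTau_eq_heatBracket (hzeta : IsWeierstrassZeta zeta) (heta1 : IsEta1 zeta eta1)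
    (hτ : 0 < τ.im) {z : ℂ} (hz : ¬ InLattice τ z) :
    wpdTau τ z = -I / (4 * Real.pi) * heatBracket (unitPeriodPair τ hτ) (zeta τ) (eta1 τ) z := by
  let L := unitPeriodPair τ hτ
  let D : ℂ → ℂ := fun w ↦ wpdTau τ w - -I / (4 * Real.pi) * heatBracket L (zeta τ) (eta1 τ) w
  have hmem (w : ℂ) : w ∉ L.lattice ↔ ¬ InLattice τ w := (mem_lattice_unitPeriodPair hτ).not
  have hζ : ∀ w ∉ L.lattice, HasDerivAt (zeta τ) (-L.weierstrassP w) w := fun _ ↦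
    hzeta.hasDerivAt_of_notMem_lattice hτ
  have hD : DifferentiableOn ℂ D (L.lattice : Set ℂ)ᶜ := fun w hw ↦ by
    have hwpdTau := differentiableAt_wpdTau hτ fun m n _ hmn ↦ (hmem w).mp hw ⟨m, n, hmn⟩
    exact (hwpdTau.fun_sub ((differentiableAt_heatBracket hw
      (hζ w hw).differentiableAt).const_mul _)).differentiableWithinAt
  have hD_one : ∀ w ∉ L.lattice, D (w + 1) = D w := fun w hw ↦ by
    have hη : zeta τ (w + 1) = zeta τ w + eta1 τ := by
      linear_combination -heta1 τ hτ w ((hmem w).mp hw)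
    simp only [D, wpdTau_add_one, heatBracket_add (l := 1) L.ω₁_mem_lattice hη]
    ring
  have hD_tau : ∀ w ∉ L.lattice, D (w + τ) = D w := fun w hw ↦ by
    have hw' := (hmem w).mp hw
    simp only [D, wpdTau_add_tau hτ hw', L, heatBracket_add_tau hzeta heta1 hτ hw']
    linear_combination deriv (wpd τ) w * neg_I_div_four_mul_pi_mul
  have hD_pole : Tendsto (fun w ↦ w * D w) (𝓝[≠] 0) (𝓝 0) := by
    have hlim := (tendsto_mul_wpdTau hτ).sub
      ((tendsto_mul_heatBracket (η := eta1 τ) hζ (hzeta τ hτ).2.2).const_mul (-I / (4 * Real.pi)))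
    rw [mul_zero, sub_zero] at hlim
    refine hlim.congr fun w ↦ ?_
    simp only [D]
    ring
  have hz' : z ∉ L.lattice := (hmem z).mpr hz
  have hodd : D (-z) = -D z := by
    simp only [D, wpdTau_neg, heatBracket_neg (hzeta τ hτ).1]
    ring
  have hconst : D (-z) = D z := apply_eq_apply_of_periodic_off_lattice L hD hD_one hD_tau hD_pole
    (by rwa [L.lattice.neg_mem_iff]) hz'
  exact sub_eq_zero.mp (self_eq_neg.mp (hconst.symm.trans hodd))

end HeatEquation

/-- Lemma 2.3 (iv): the `τ`-derivative of `℘′(z|τ)`. -/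
theorem tau_deriv_wpd
    (zeta : ℂ → ℂ → ℂ) (eta1 : ℂ → ℂ)
    (hzeta : IsWeierstrassZeta zeta) (heta1 : IsEta1 zeta eta1) :
    ∀ τ : ℂ, 0 < τ.im → ∀ z : ℂ, ¬ InLattice τ z →
    HasDerivAt (fun t => wpd t z)
      ((-Complex.I / (4 * (Real.pi : ℂ))) *
        (6 * (wp τ z - eta1 τ) * wpd τ z
          + (zeta τ z - z * eta1 τ) * (12 * (wp τ z) ^ 2 - g2 τ))) τ := by
  intro τ hτ z hz
  have hderiv := hasDerivAt_wpd_tau hτ hz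
  rwa [wpdTau_eq_heatBracket hzeta heta1 hτ hz, heatBracket, ← wp_eq_weierstrassP hτ,
    ← wpd_eq_derivWeierstrassP hτ, ← g2_eq_g₂ hτ] at hderiv
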